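/- Let q ∈ 𝕊 with re(q) = q₀, and suppose P ∈ 𝕊[x] is written as P(x) = Q(x) Ψ_q(x) + B x + A with Q ∈ 𝕊[x] and A, B = b₀ + b₁ i + b₂ j + b₃ k ∈ 𝕊, where B ≠ 0 and det(B) = 0. Suppose there is γ₀ ∈ ℝ with A + B γ₀ = 0 and that (q₀ − γ₀)² = −dv(q). Set k₁ = −(b₀b₂ + b₁b₃)/(b₀² + b₁²), k₂ = (b₁b₂ − b₀b₃)/(b₀² + b₁²). Then the set of zeros of P quasi-similar to q (re(z) = q₀ and det(z) = det(q)) is exactly the line ℒ = { q₀ + β i + (k₂β + k₁(q₀ − γ₀)) j + (−k₁β + k₂(q₀ − γ₀)) k : β ∈ ℝ }. -/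

import Mathlib

open Quaternion Polynomial

noncomputable section

/-- The real algebra of coquaternions (split quaternions):
basis `1, i, j, k` with `i² = -1`, `j² = k² = 1`, `ij = -ji = k`. -/
abbrev CoQ : Type := ℍ[ℝ, -1, 1]

/-- The determinant of a coquaternion: `det q = q₀² + q₁² - q₂² - q₃²` (equals `q * star q`). -/
def coDet (q : CoQ) : ℝ := q.re ^ 2 + q.imI ^ 2 - q.imJ ^ 2 - q.imK ^ 2

/-- The determinant of the vector part of a coquaternion: `dv q = q₁² - q₂² - q₃²`. -/
def coDv (q : CoQ) : ℝ := q.imI ^ 2 - q.imJ ^ 2 - q.imK ^ 2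

/-- The characteristic polynomial of the quasi-similarity class of `q`:
`Ψ_q(x) = x² - 2 re(q) x + det(q)`, a polynomial with real coefficients. -/
def charPoly (q : CoQ) : Polynomial CoQ :=
  X ^ 2 - C ((2 * q.re : ℝ) : CoQ) * X + C ((coDet q : ℝ) : CoQ)

theorem co_commute (r : ℝ) (z : CoQ) : Commute ((r : ℝ) : CoQ) z := by
  show _ * _ = _ * _
  ext <;> simp [mul_comm]

theorem charPoly_coeff_commute (q z : CoQ) (n : ℕ) : Commute ((charPoly q).coeff n) z := by
  unfold charPoly
  rw [coeff_add, coeff_sub, coeff_X_pow, coeff_C_mul, coeff_X, coeff_C]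
  refine ((Commute.sub_left ?_ ?_).add_left ?_)
  · split_ifs <;> simp
  · refine (co_commute _ _).mul_left ?_
    split_ifs <;> simp
  · split_ifs
    · exact co_commute _ _
    · simp

theorem charPoly_eval (q z : CoQ) (h1 : z.re = q.re) (h2 : coDet z = coDet q) :
    (charPoly q).eval z = 0 := by
  unfold charPoly
  rw [eval_add, eval_sub, eval_C_mul, eval_C, eval_X, show ((X : Polynomial CoQ)^2).eval z = z^2 by simp [pow_two], ← h1, ← h2]
  have hd : coDet z = z.re ^ 2 + z.imI ^ 2 - z.imJ ^ 2 - z.imK ^ 2 := rfl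
  have ht : 2 * z.re = z.re + z.re := two_mul _
  generalize coDet z = d at hd
  rw [pow_two]
  generalize 2 * z.re = t at ht
  ext <;> simp <;> simp only [hd, ht] <;> ring

theorem eval_P (P Q : Polynomial CoQ) (q A B z : CoQ)
    (hP : P = Q * charPoly q + C B * X + C A) (h1 : z.re = q.re) (h2 : coDet z = coDet q) :
    P.eval z = B * z + A := by
  have h : (Q * charPoly q).eval z = Q.eval z * (charPoly q).eval z :=
    eval₂_mul_noncomm (RingHom.id CoQ) z (fun k => charPoly_coeff_commute q z k)
  rw [hP, eval_add, eval_add, h, charPoly_eval q z h1 h2, eval_C_mul, eval_X, eval_C]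
  simp

/-- Case 3(b)(i) (linear zero): if `P = Q Ψ_q + B x + A` with `B ≠ 0` singular,
`A + B γ₀ = 0` for a real `γ₀`, and `(q₀ - γ₀)² = -dv q`, then the zeros of `P`
quasi-similar to `q` form exactly the line ℒ. -/
theorem stmt_17 (P Q : Polynomial CoQ) (q A B : CoQ)
    (hP : P = Q * charPoly q + C B * X + C A)
    (hB0 : B ≠ 0) (hBdet : coDet B = 0)
    (γ₀ : ℝ) (hγ : A + B * ((γ₀ : ℝ) : CoQ) = 0)
    (hcond : (q.re - γ₀) ^ 2 = -coDv q)
    (k₁ k₂ : ℝ)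
    (hk₁ : k₁ = -((B.re * B.imJ + B.imI * B.imK) / (B.re ^ 2 + B.imI ^ 2)))
    (hk₂ : k₂ = (B.imI * B.imJ - B.re * B.imK) / (B.re ^ 2 + B.imI ^ 2)) :
    {z : CoQ | z.re = q.re ∧ coDet z = coDet q ∧ P.eval z = 0} =
      {z : CoQ | ∃ β : ℝ,
        z = (⟨q.re, β, k₂ * β + k₁ * (q.re - γ₀), -k₁ * β + k₂ * (q.re - γ₀)⟩ : CoQ)} := by
  have hn : B.re ^ 2 + B.imI ^ 2 ≠ 0 := by
    intro h
    apply hB0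
    unfold coDet at hBdet
    have e0 : B.re = 0 := by nlinarith [sq_nonneg B.re, sq_nonneg B.imI]
    have e1 : B.imI = 0 := by nlinarith [sq_nonneg B.re, sq_nonneg B.imI]
    have e2 : B.imJ = 0 := by nlinarith [sq_nonneg B.imJ, sq_nonneg B.imK]
    have e3 : B.imK = 0 := by nlinarith [sq_nonneg B.imJ, sq_nonneg B.imK]
    ext <;> simp [*]
  have hA : A = - (B * ((γ₀ : ℝ) : CoQ)) := eq_neg_of_add_eq_zero_left hγ
  have hkk : k₁ ^ 2 + k₂ ^ 2 = 1 := by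
    unfold coDet at hBdet
    rw [hk₁, hk₂]
    field_simp
    linear_combination (-(B.re ^ 2 + B.imI ^ 2)) * hBdet
  obtain ⟨b0, b1, b2, b3⟩ := B
  simp only [] at hn hk₁ hk₂
  have hk₁' : k₁ * (b0 ^ 2 + b1 ^ 2) = -(b0 * b2 + b1 * b3) := by rw [hk₁]; field_simp
  have hk₂' : k₂ * (b0 ^ 2 + b1 ^ 2) = b1 * b2 - b0 * b3 := by rw [hk₂]; field_simp
  clear hk₁ hk₂
  -- `v = -κ u`
  have h2 : b2 = -(k₁ * b0 - k₂ * b1) := by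
    apply mul_right_cancel₀ hn
    linear_combination b0 * hk₁' - b1 * hk₂'
  have h3 : b3 = -(k₁ * b1 + k₂ * b0) := by
    apply mul_right_cancel₀ hn
    linear_combination b1 * hk₁' + b0 * hk₂'
  ext z
  simp only [Set.mem_ofPred_eq]
  constructor
  · rintro ⟨z1, z2, z3⟩
    rw [eval_P P Q q A _ z hP z1 z2, hA] at z3
    obtain ⟨z0, β, y, w⟩ := z
    simp only [] at z1
    subst z1
    refine ⟨β, ?_⟩
    have c2 := congrArg QuaternionAlgebra.imJ z3
    have c3 := congrArg QuaternionAlgebra.imK z3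
    simp at c2 c3
    ext
    · rfl
    · rfl
    · show y = _
      apply mul_right_cancel₀ hn
      rw [h2, h3] at c2 c3
      linear_combination b0 * c2 + b1 * c3
    · show w = _
      apply mul_right_cancel₀ hn
      rw [h2, h3] at c2 c3
      linear_combination b0 * c3 - b1 * c2
  · rintro ⟨β, rfl⟩
    have hd : coDet (⟨q.re, β, k₂ * β + k₁ * (q.re - γ₀), -k₁ * β + k₂ * (q.re - γ₀)⟩ : CoQ)
        = coDet q := by
      unfold coDv at hcond
      unfold coDet
      simp only []
      linear_combination (-(β ^ 2 + (q.re - γ₀) ^ 2)) * hkk - hcond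
    refine ⟨rfl, hd, ?_⟩
    rw [eval_P P Q q A _ ⟨q.re, β, _, _⟩ hP rfl hd, hA, h2, h3]
    ext
    · simp
      linear_combination (-b0 * (q.re - γ₀) + b1 * β) * hkk
    · simp
      linear_combination (-b1 * (q.re - γ₀) - b0 * β) * hkk
    · simp
      ring
    · simp
      ring
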